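/- For every real number x, e^{−|x|} = (1/(2√π)) · ∫₀^∞ e^{−τ x²} · τ^{−3/2} · e^{−1/(4τ)} dτ. -/

import Mathlib

open MeasureTheory Real

open Filter Topology

noncomputable def auxG (u : ℝ) : ℝ := ∫ s in (0:ℝ)..u, Real.exp (-s ^ 2)

lemma auxG_deriv (u : ℝ) : HasDerivAt auxG (Real.exp (-u ^ 2)) u := by
  have hc : Continuous (fun s : ℝ => Real.exp (-s ^ 2)) := by fun_prop
  exact intervalIntegral.integral_hasDerivAt_right (hc.intervalIntegrable _ _)
    (hc.stronglyMeasurableAtFilter _ _) hc.continuousAt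

lemma auxG_top : Tendsto auxG atTop (𝓝 (√π / 2)) := by
  have h := integral_gaussian_Ioi 1
  have hi : Integrable (fun s : ℝ => Real.exp (-1 * s ^ 2)) := integrable_exp_neg_mul_sq one_pos
  simp only [neg_mul, one_mul, div_one] at h hi
  rw [← h]
  exact intervalIntegral_tendsto_integral_Ioi 0 hi.integrableOn tendsto_id

lemma auxG_neg (u : ℝ) : auxG (-u) = - auxG u := by
  unfold auxG
  have := intervalIntegral.integral_comp_neg (a := 0) (b := u) (fun s : ℝ => Real.exp (-s ^ 2))
  simp only [neg_zero, neg_sq] at this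
  rw [this, intervalIntegral.integral_symm]

lemma auxG_bot : Tendsto auxG atBot (𝓝 (-(√π / 2))) := by
  have h := (auxG_top.comp tendsto_neg_atBot_atTop).neg
  refine h.congr fun u => ?_
  simp [auxG_neg]

noncomputable def auxF (a t : ℝ) : ℝ :=
  2 * Real.exp (-a) * auxG (a * √t - 1 / 2 * (√t)⁻¹)
    - 2 * Real.exp a * auxG (a * √t + 1 / 2 * (√t)⁻¹)

lemma auxF_deriv (a t : ℝ) (ht : 0 < t) : HasDerivAt (auxF a)
    (Real.exp (-t * a ^ 2) * t ^ (-(3 : ℝ) / 2) * Real.exp (-1 / (4 * t))) t := by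
  have hs : 0 < √t := Real.sqrt_pos.2 ht
  have hss : √t ^ 2 = t := Real.sq_sqrt ht.le
  have h1 : HasDerivAt (fun t => √t) (1 / (2 * √t)) t := Real.hasDerivAt_sqrt ht.ne'
  have h2 := h1.fun_inv hs.ne'
  have hp := (h1.const_mul a).sub (h2.const_mul (1 / 2))
  have hq := (h1.const_mul a).add (h2.const_mul (1 / 2))
  have hP := ((auxG_deriv _).comp t hp).const_mul (2 * Real.exp (-a))
  have hQ := ((auxG_deriv _).comp t hq).const_mul (2 * Real.exp a)
  have h := hP.sub hQ
  refine h.congr_deriv ?_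
  have e1 : Real.exp (-(a * √t - 1 / 2 * (√t)⁻¹) ^ 2)
      = Real.exp a * (Real.exp (-t * a ^ 2) * Real.exp (-1 / (4 * t))) := by
    rw [← Real.exp_add, ← Real.exp_add]
    congr 1
    rw [← hss]; simp only [Real.sqrt_sq hs.le]; field_simp; ring
  have e2 : Real.exp (-(a * √t + 1 / 2 * (√t)⁻¹) ^ 2)
      = Real.exp (-a) * (Real.exp (-t * a ^ 2) * Real.exp (-1 / (4 * t))) := by
    rw [← Real.exp_add, ← Real.exp_add]
    congr 1
    rw [← hss]; simp only [Real.sqrt_sq hs.le]; field_simp; ring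
  have e3 : t ^ (-(3 : ℝ) / 2) = (√t ^ 3)⁻¹ := by
    rw [Real.sqrt_eq_rpow, ← Real.rpow_natCast, ← Real.rpow_mul ht.le, ← Real.rpow_neg ht.le]
    norm_num
  have e4 : Real.exp (-a) = (Real.exp a)⁻¹ := Real.exp_neg a
  simp only [Pi.sub_apply, Pi.add_apply]
  rw [e1, e2, e3, e4]
  have := Real.exp_pos a
  field_simp
  ring

lemma auxF_zero (a : ℝ) : Tendsto (auxF a) (𝓝[>] 0)
    (𝓝 (2 * Real.exp (-a) * (-(√π / 2)) - 2 * Real.exp a * (√π / 2))) := by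
  have h0 : Tendsto (fun t : ℝ => √t) (𝓝[>] 0) (𝓝 0) := by
    have := (Real.continuous_sqrt.tendsto 0).mono_left (nhdsWithin_le_nhds (s := Set.Ioi 0))
    simpa using this
  have h0' : Tendsto (fun t : ℝ => √t) (𝓝[>] 0) (𝓝[>] 0) :=
    tendsto_nhdsWithin_iff.2 ⟨h0, by
      filter_upwards [self_mem_nhdsWithin] with t ht using Real.sqrt_pos.2 ht⟩
  have hi : Tendsto (fun t : ℝ => 1 / 2 * (√t)⁻¹) (𝓝[>] 0) atTop :=
    (tendsto_inv_nhdsGT_zero.comp h0').const_mul_atTop (by norm_num)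
  have hq := (h0.const_mul a).add_atTop hi
  have hp := (h0.const_mul a).add_atBot (tendsto_neg_atTop_atBot.comp hi)
  refine Tendsto.sub ?_ ?_
  · exact (auxG_bot.comp hp).const_mul _
  · exact (auxG_top.comp hq).const_mul _

lemma auxF_top (a : ℝ) (ha : 0 ≤ a) : Tendsto (auxF a) atTop
    (𝓝 (2 * Real.exp (-a) * (√π / 2) - 2 * Real.exp a * (√π / 2))) := by
  have hi : Tendsto (fun t : ℝ => 1 / 2 * (√t)⁻¹) atTop (𝓝 (1 / 2 * 0)) :=
    (tendsto_inv_atTop_zero.comp Real.tendsto_sqrt_atTop).const_mul _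
  rcases ha.eq_or_lt with rfl | ha
  · have hc : Continuous auxG :=
      continuous_iff_continuousAt.2 fun u => (auxG_deriv u).continuousAt
    have hz : Tendsto (fun t : ℝ => auxG (1 / 2 * (√t)⁻¹)) atTop (𝓝 0) := by
      have := (hc.tendsto (1 / 2 * 0)).comp hi
      simpa [auxG, Function.comp_def] using this
    have := hz.const_mul (-4)
    simp only [mul_zero, neg_zero, sub_self] at this ⊢
    refine this.congr fun t => ?_
    simp only [auxF, zero_mul, zero_sub, zero_add, auxG_neg, neg_zero, Real.exp_zero]
    ring
  · have hs := Real.tendsto_sqrt_atTop.const_mul_atTop ha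
    have hq := hs.atTop_add hi
    have hp := hs.atTop_add hi.neg
    refine Tendsto.sub ?_ ?_
    · exact (auxG_top.comp hp).const_mul _
    · exact (auxG_top.comp hq).const_mul _

/-- Explicit subordination formula for `γ = 1/2`: for every real `x`,
`e^{-|x|} = (1/(2√π)) ∫₀^∞ e^{-τx²} τ^{-3/2} e^{-1/(4τ)} dτ`. -/
theorem stmt12 (x : ℝ) :
    Real.exp (-|x|) =
      (1 / (2 * Real.sqrt π)) *
        ∫ τ in Set.Ioi (0 : ℝ),
          Real.exp (-τ * x ^ 2) * τ ^ (-(3 : ℝ) / 2) * Real.exp (-1 / (4 * τ)) := by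
  rw [← sq_abs x]
  set a := |x| with ha
  have ha0 : 0 ≤ a := abs_nonneg x
  set c := 2 * Real.exp (-a) * (-(√π / 2)) - 2 * Real.exp a * (√π / 2) with hc
  have key := integral_Ioi_of_hasDerivAt_of_nonneg (a := 0) (g := Function.update (auxF a) 0 c)
    (g' := fun τ => Real.exp (-τ * a ^ 2) * τ ^ (-(3 : ℝ) / 2) * Real.exp (-1 / (4 * τ)))
    (l := 2 * Real.exp (-a) * (√π / 2) - 2 * Real.exp a * (√π / 2))
    (by
      rw [continuousWithinAt_update_same, Set.Ici_sdiff_left]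
      exact auxF_zero a)
    (by
      intro t ht
      refine (auxF_deriv a t ht).congr_of_eventuallyEq ?_
      filter_upwards [lt_mem_nhds (Set.mem_Ioi.1 ht)] with s hs
      exact Function.update_of_ne hs.ne' _ _)
    (by
      intro t ht
      have : (0:ℝ) < t := ht
      positivity)
    (by
      refine (auxF_top a ha0).congr' ?_
      filter_upwards [eventually_gt_atTop 0] with s hs
      exact (Function.update_of_ne hs.ne' _ _).symm)
  rw [key, Function.update_self, hc]
  have : 0 < √π := Real.sqrt_pos.2 Real.pi_pos
  field_simp
  ring
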